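/- Let d ≥ 1, 0 ≤ s ≤ d, and let C ∈ ℝ^{d×d×d} be the core tensor. If G ∈ (I_s ⊕ GL_{d−s})*C, then G_{ijk} = C_{ijk} for all 1 ≤ i,j ≤ d and all 1 ≤ k ≤ s. -/

import Mathlib

/-! The core tensor is supported on `α ≤ β ≤ γ`. In the sum defining `(A*C) i j k` with `k < s`,
row `k` of `A` is that of the identity, so only `γ = k` contributes; the support condition then
forces `α, β < s`, where the columns of `A` are those of the identity. Hence every term agrees
with the corresponding term for `A = 1`. -/

open Matrix BigOperators

/-- The core tensor `C ∈ ℝ^{d×d×d}` (0-based indices). -/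
def coreTensor (d : ℕ) : Fin d → Fin d → Fin d → ℝ := fun i j k =>
  if i = j ∧ j = k then 1
  else if (i < j ∧ j = k) ∨ (i = j ∧ j < k) then 3
  else if i < j ∧ j < k then 6
  else 0

/-- The matrix-tensor congruence action `A * T`. -/
noncomputable def congrAct {d : ℕ} (A : Matrix (Fin d) (Fin d) ℝ)
    (T : Fin d → Fin d → Fin d → ℝ) : Fin d → Fin d → Fin d → ℝ :=
  fun i j k => ∑ α, ∑ β, ∑ γ, T α β γ * A i α * A j β * A k γ


/-- Membership in `I_s ⊕ GL_{d-s}`: an invertible matrix whose rows and columns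
with (0-based) index `< s` agree with the identity matrix. -/
def IsBlockIdGL (d s : ℕ) (A : Matrix (Fin d) (Fin d) ℝ) : Prop :=
  IsUnit A ∧ ∀ i j : Fin d, ((i : ℕ) < s ∨ (j : ℕ) < s) →
    A i j = if i = j then 1 else 0

theorem coreTensor_eq_zero {d : ℕ} {i j k : Fin d} (h : ¬ (i ≤ j ∧ j ≤ k)) :
    coreTensor d i j k = 0 := by
  unfold coreTensor
  grind

theorem stmt4 (d s : ℕ) (hd : 1 ≤ d) (hsd : s ≤ d)
    (G : Fin d → Fin d → Fin d → ℝ)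
    (hG : ∃ A : Matrix (Fin d) (Fin d) ℝ,
      IsBlockIdGL d s A ∧ G = congrAct A (coreTensor d)) :
    ∀ i j k : Fin d, (k : ℕ) < s → G i j k = coreTensor d i j k := by
  obtain ⟨A, ⟨-, hA⟩, rfl⟩ := hG
  intro i j k hk
  have key : ∀ α β γ : Fin d, coreTensor d α β γ * A i α * A j β * A k γ =
      if k = γ then (if j = β then (if i = α then coreTensor d α β γ else 0) else 0) else 0 := by
    intro α β γ
    rw [hA k γ (Or.inl hk)]
    by_cases hγ : k = γ
    · subst hγ
      by_cases h : α ≤ β ∧ β ≤ k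
      · have hβ : (β : ℕ) < s := lt_of_le_of_lt h.2 hk
        have hα : (α : ℕ) < s := lt_of_le_of_lt h.1 hβ
        rw [hA i α (Or.inr hα), hA j β (Or.inr hβ)]
        split_ifs <;> simp
      · simp [coreTensor_eq_zero h]
    · simp [hγ]
  simp [congrAct, key]
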